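/- arXiv:1510.06328 — 3 statements merged into one kernel-verified Lean document; each statement's English description precedes it below -/
import Mathlib

section
/- A permutation σ avoids all three patterns 4213, 2413 and 2143 if and only if σ admits an H-gridding, i.e. there exists a value cutoff k with 0 ≤ k ≤ n such that the subsequence of entries of σ with values greater than k is increasing and the subsequence of entries with values at most k avoids the pattern 213. -/
open Filter Topology PowerSeries

/-- `σ` contains the pattern `π`. -/
def PatternContains {n k : ℕ} (σ : Equiv.Perm (Fin n)) (π : Fin k → Fin k) : Prop :=
  ∃ f : Fin k → Fin n, StrictMono f ∧ ∀ a b : Fin k, π a < π b ↔ σ (f a) < σ (f b)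

/-- `σ` avoids the pattern `π`. -/
def PatternAvoids {n k : ℕ} (σ : Equiv.Perm (Fin n)) (π : Fin k → Fin k) : Prop :=
  ¬ PatternContains σ π

/-- The pattern 4213 (zero-indexed values). -/
def p4213 : Fin 4 → Fin 4 := ![3, 1, 0, 2]

/-- The pattern 2413 (zero-indexed values). -/
def p2413 : Fin 4 → Fin 4 := ![1, 3, 0, 2]

/-- The pattern 2143 (zero-indexed values). -/
def p2143 : Fin 4 → Fin 4 := ![1, 0, 3, 2]

/-- The pattern 213 (zero-indexed values). -/
def p213 : Fin 3 → Fin 3 := ![1, 0, 2]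

/-- `σ` avoids 4213, 2413 and 2143. -/
def AvoidsH {n : ℕ} (σ : Equiv.Perm (Fin n)) : Prop :=
  PatternAvoids σ p4213 ∧ PatternAvoids σ p2413 ∧ PatternAvoids σ p2143

/-- `σ` avoids 4213 and 2143. -/
def AvoidsD {n : ℕ} (σ : Equiv.Perm (Fin n)) : Prop :=
  PatternAvoids σ p4213 ∧ PatternAvoids σ p2143

/-- An H-gridding of `σ`: a value cutoff `k ∈ {0,…,n}` such that the subsequence of
entries with (1-based) values `> k` is increasing and the subsequence of entries with
values `≤ k` avoids 213. -/
def HGridding {n : ℕ} (σ : Equiv.Perm (Fin n)) (k : ℕ) : Prop :=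
  k ≤ n ∧
  (∀ i j : Fin n, i < j → k < (σ i : ℕ) + 1 → k < (σ j : ℕ) + 1 → σ i < σ j) ∧
  ¬ ∃ f : Fin 3 → Fin n, StrictMono f ∧ (∀ a, (σ (f a) : ℕ) + 1 ≤ k) ∧
      (∀ a b : Fin 3, p213 a < p213 b ↔ σ (f a) < σ (f b))

/-- A G-gridding of `σ`: a pair `(j, k)` with `0 ≤ j, k ≤ n` such that (i) the first `j`
entries have values `≤ k` and are increasing, (ii) the subsequence of entries at
(1-based) positions `> j` with values `> k` is increasing, and (iii) the subsequence of
entries at positions `> j` with values `≤ k` avoids 213. -/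
def GGridding {n : ℕ} (σ : Equiv.Perm (Fin n)) (j k : ℕ) : Prop :=
  j ≤ n ∧ k ≤ n ∧
  (∀ i : Fin n, (i : ℕ) < j → (σ i : ℕ) + 1 ≤ k) ∧
  (∀ i₁ i₂ : Fin n, i₁ < i₂ → (i₂ : ℕ) < j → σ i₁ < σ i₂) ∧
  (∀ i₁ i₂ : Fin n, i₁ < i₂ → j ≤ (i₁ : ℕ) → k < (σ i₁ : ℕ) + 1 → k < (σ i₂ : ℕ) + 1 →
      σ i₁ < σ i₂) ∧
  ¬ ∃ f : Fin 3 → Fin n, StrictMono f ∧ (∀ a, j ≤ ((f a) : ℕ) ∧ (σ (f a) : ℕ) + 1 ≤ k) ∧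
      (∀ a b : Fin 3, p213 a < p213 b ↔ σ (f a) < σ (f b))

/-- The number of permutations of length `n` avoiding 4213, 2413 and 2143. -/
noncomputable def hCount (n : ℕ) : ℕ :=
  Nat.card {σ : Equiv.Perm (Fin n) // AvoidsH σ}

/-- The number of permutations of length `n` avoiding 4213 and 2143. -/
noncomputable def dCount (n : ℕ) : ℕ :=
  Nat.card {σ : Equiv.Perm (Fin n) // AvoidsD σ}

/-- The minimal number of top points over all H-griddings of `σ`. -/
noncomputable def topPts {n : ℕ} (σ : Equiv.Perm (Fin n)) : ℕ :=
  n - sSup {k | HGridding σ k}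

/-- The minimal number of left points over all G-griddings of `σ`. -/
noncomputable def leftPts {n : ℕ} (σ : Equiv.Perm (Fin n)) : ℕ :=
  sInf {j | ∃ k, GGridding σ j k}

/-- A length-four word in the positions of `σ` whose entries compare as in `π` is an occurrence
of `π`. -/
theorem patternContains_of_vec4 {n : ℕ} {σ : Equiv.Perm (Fin n)} {π : Fin 4 → Fin 4}
    {a b c d : Fin n} (hab : a < b) (hbc : b < c) (hcd : c < d)
    (h : ∀ x y : Fin 4, π x < π y ↔ σ (![a, b, c, d] x) < σ (![a, b, c, d] y)) :
    PatternContains σ π := by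
  refine ⟨![a, b, c, d], ?_, h⟩
  rw [Fin.strictMono_iff_lt_succ]
  intro x
  fin_cases x
  exacts [hab, hbc, hcd]

/-- `σ` contains one of 4213, 2413, 2143 iff it has an occurrence of 213 whose last entry is
preceded by a larger entry. -/
theorem patternContains_or_iff {n : ℕ} (σ : Equiv.Perm (Fin n)) :
    (PatternContains σ p4213 ∨ PatternContains σ p2413 ∨ PatternContains σ p2143) ↔
      ∃ i j l q : Fin n, i < j ∧ j < l ∧ q < l ∧ σ j < σ i ∧ σ i < σ l ∧ σ l < σ q := by
  constructor
  · rintro (⟨f, hf, h⟩ | ⟨f, hf, h⟩ | ⟨f, hf, h⟩)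
    · exact ⟨f 1, f 2, f 3, f 0, hf (by decide), hf (by decide), hf (by decide),
        (h 2 1).1 (by decide), (h 1 3).1 (by decide), (h 3 0).1 (by decide)⟩
    · exact ⟨f 0, f 2, f 3, f 1, hf (by decide), hf (by decide), hf (by decide),
        (h 2 0).1 (by decide), (h 0 3).1 (by decide), (h 3 1).1 (by decide)⟩
    · exact ⟨f 0, f 1, f 3, f 2, hf (by decide), hf (by decide), hf (by decide),
        (h 1 0).1 (by decide), (h 0 3).1 (by decide), (h 3 2).1 (by decide)⟩
  · rintro ⟨i, j, l, q, hij, hjl, hql, hji, hil, hlq⟩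
    rcases lt_trichotomy q i with hqi | rfl | hiq
    · refine .inl (patternContains_of_vec4 hqi hij hjl fun x y => ?_)
      fin_cases x <;> fin_cases y <;> simp [p4213] <;> order
    · order
    rcases lt_trichotomy q j with hqj | rfl | hjq
    · refine .inr (.inl (patternContains_of_vec4 hiq hqj hjl fun x y => ?_))
      fin_cases x <;> fin_cases y <;> simp [p2413] <;> order
    · order
    · refine .inr (.inr (patternContains_of_vec4 hij hjq hql fun x y => ?_))
      fin_cases x <;> fin_cases y <;> simp [p2143] <;> order

/-- The entries of `σ` with values at least `k` (zero-based) are increasing. -/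
def IncreasingAbove {n : ℕ} (σ : Equiv.Perm (Fin n)) (k : ℕ) : Prop :=
  ∀ i j : Fin n, i < j → k < (σ i : ℕ) + 1 → k < (σ j : ℕ) + 1 → σ i < σ j

/-- If the cutoff `k + 1` makes the top entries increasing but `k` does not, then the entry of
value `k` is preceded by a larger entry. -/
theorem IncreasingAbove.exists_inversion {n k : ℕ} {σ : Equiv.Perm (Fin n)}
    (hk : IncreasingAbove σ (k + 1)) (hk' : ¬ IncreasingAbove σ k) :
    ∃ q p : Fin n, q < p ∧ σ p < σ q ∧ (σ p : ℕ) = k := by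
  simp only [IncreasingAbove, not_forall, not_lt] at hk'
  obtain ⟨q, p, hqp, hq, hp, hle⟩ := hk'
  have hlt : σ p < σ q := lt_of_le_of_ne hle fun h => hqp.ne' (σ.injective h)
  refine ⟨q, p, hqp, hlt, ?_⟩
  by_contra hne
  exact hlt.not_gt (hk q p hqp (by omega) (by omega))

theorem avoidsH_iff_exists_HGridding {n : ℕ} (σ : Equiv.Perm (Fin n)) :
    (PatternAvoids σ p4213 ∧ PatternAvoids σ p2413 ∧ PatternAvoids σ p2143) ↔
      ∃ k, HGridding σ k := by
  classical
  have key := patternContains_or_iff σ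
  simp only [PatternAvoids, ← not_or, key]
  constructor
  · intro hav
    have hex : ∃ k, IncreasingAbove σ k := ⟨n, fun i j _ hi _ => by omega⟩
    refine ⟨Nat.find hex, Nat.find_min' hex fun i j _ hi _ => by omega, Nat.find_spec hex, ?_⟩
    rintro ⟨f, hf, hle, h⟩
    obtain ⟨k, hk⟩ : ∃ k, Nat.find hex = k + 1 :=
      Nat.exists_eq_succ_of_ne_zero (by have := hle 0; omega)
    obtain ⟨q, p, hqp, hlt, hp⟩ := IncreasingAbove.exists_inversion
      (hk ▸ Nat.find_spec hex) (Nat.find_min hex (by omega : k < Nat.find hex))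
    have h01 : f 0 < f 1 := hf (by decide)
    have h12 : f 1 < f 2 := hf (by decide)
    have v10 : σ (f 1) < σ (f 0) := (h 1 0).1 (by decide)
    have v02 : σ (f 0) < σ (f 2) := (h 0 2).1 (by decide)
    have v2p : σ (f 2) ≤ σ p := by
      have := hle 2
      rw [Fin.le_def]
      omega
    rcases lt_or_ge q (f 2) with hq | hq
    · exact hav ⟨f 0, f 1, f 2, q, h01, h12, hq, v10, v02, v2p.trans_lt hlt⟩
    · exact hav ⟨f 0, f 1, p, q, h01, h12.trans_le (hq.trans hqp.le), hqp, v10,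
        v02.trans_le v2p, hlt⟩
  · rintro ⟨k, -, hinc, hno⟩ ⟨i, j, l, q, hij, hjl, hql, hji, hil, hlq⟩
    have hl : (σ l : ℕ) + 1 ≤ k := by
      by_contra hl
      exact hlq.not_gt (hinc q l hql (by omega) (by omega))
    refine hno ⟨![i, j, l], ?_, fun x => ?_, fun x y => ?_⟩
    · rw [Fin.strictMono_iff_lt_succ]
      intro x
      fin_cases x
      exacts [hij, hjl]
    · fin_cases x <;> simp <;> omega
    · fin_cases x <;> fin_cases y <;> simp [p213] <;> order
end

section
/- Let h(n) denote the number of permutations of length n avoiding the patterns 4213, 2413 and 2143, and let H = ∑_{n≥1} h(n)·zⁿ be the associated formal power series over ℚ (with constant term 0). Then H satisfies the algebraic identity z·(2 − z)·H² − (1 − 3z + 2z²)·H + z·(1 − z) = 0 in ℚ⟦z⟧; equivalently, H(z) = (1 − 3z + 2z² − √(1 − 6z + 5z²)) / (2z(2 − z)). -/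
open Filter Topology PowerSeries

namespace PatternH

/-- The entry at position `i` plays the role of `3` in an occurrence of `213`. -/
def IsTop {n : ℕ} (σ : Equiv.Perm (Fin n)) (i : Fin n) : Prop :=
  ∃ a b, a < b ∧ b < i ∧ σ b < σ a ∧ σ a < σ i

/-- The first `p` entries of `σ` are not increasing. -/
def HasInversionBefore {n : ℕ} (σ : Equiv.Perm (Fin n)) (p : ℕ) : Prop :=
  ∃ a b : Fin n, a < b ∧ (b : ℕ) < p ∧ σ b < σ a

/-- A permutation avoids 4213, 2413 and 2143 iff every top of a 213 is a left-to-right maximum. -/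
theorem avoidsH_iff {n : ℕ} (σ : Equiv.Perm (Fin n)) :
    AvoidsH σ ↔ ∀ i, IsTop σ i → ∀ j, j < i → σ j < σ i := by
  constructor
  · rintro ⟨h1, h2, h3⟩ i ⟨a, b, hab, hbi, hba, hai⟩ j hji
    by_contra hij
    have hne : σ j ≠ σ i := fun h => hji.ne (σ.injective h)
    have hlt : σ i < σ j := lt_of_le_of_ne (not_lt.mp hij) hne.symm
    have hja : j ≠ a := by rintro rfl; exact absurd hai hij
    have hjb : j ≠ b := by rintro rfl; exact absurd (hba.trans hai) hij
    rcases lt_or_gt_of_ne hja with h | h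
    · refine h1 ⟨![j, a, b, i], ?_, ?_⟩
      · rw [Fin.strictMono_iff_lt_succ]
        simp [Fin.forall_fin_succ, h, hab, hbi]
      · simp [Fin.forall_fin_succ, p4213]
        omega
    · rcases lt_or_gt_of_ne hjb with h' | h'
      · refine h2 ⟨![a, j, b, i], ?_, ?_⟩
        · rw [Fin.strictMono_iff_lt_succ]
          simp [Fin.forall_fin_succ, h, h', hbi]
        · simp [Fin.forall_fin_succ, p2413]
          omega
      · refine h3 ⟨![a, b, j, i], ?_, ?_⟩
        · rw [Fin.strictMono_iff_lt_succ]
          simp [Fin.forall_fin_succ, hab, h', hji]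
        · simp [Fin.forall_fin_succ, p2143]
          omega
  · intro h
    refine ⟨?_, ?_, ?_⟩
    · rintro ⟨f, hf, hv⟩
      exact lt_asymm ((hv 3 0).1 (by decide)) <| h (f 3)
        ⟨f 1, f 2, hf (by decide), hf (by decide), (hv 2 1).1 (by decide),
          (hv 1 3).1 (by decide)⟩ (f 0) (hf (by decide))
    · rintro ⟨f, hf, hv⟩
      exact lt_asymm ((hv 3 1).1 (by decide)) <| h (f 3)
        ⟨f 0, f 2, hf (by decide), hf (by decide), (hv 2 0).1 (by decide),
          (hv 0 3).1 (by decide)⟩ (f 1) (hf (by decide))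
    · rintro ⟨f, hf, hv⟩
      exact lt_asymm ((hv 3 2).1 (by decide)) <| h (f 3)
        ⟨f 0, f 1, hf (by decide), hf (by decide), (hv 1 0).1 (by decide),
          (hv 0 3).1 (by decide)⟩ (f 2) (hf (by decide))

/-- Insert a new maximum into `σ` at position `p`. -/
def insertMax {n : ℕ} (p : Fin (n + 1)) (σ : Equiv.Perm (Fin n)) : Equiv.Perm (Fin (n + 1)) :=
  ((finSuccEquiv' p).trans σ.optionCongr).trans (finSuccEquiv' (Fin.last n)).symm

@[simp]
theorem insertMax_self {n : ℕ} (p : Fin (n + 1)) (σ : Equiv.Perm (Fin n)) :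
    insertMax p σ p = Fin.last n := by
  simp [insertMax]

@[simp]
theorem insertMax_succAbove {n : ℕ} (p : Fin (n + 1)) (σ : Equiv.Perm (Fin n)) (i : Fin n) :
    insertMax p σ (p.succAbove i) = (σ i).castSucc := by
  simp [insertMax]

theorem insertMax_injective (n : ℕ) :
    Function.Injective fun x : Equiv.Perm (Fin n) × Fin (n + 1) => insertMax x.2 x.1 := by
  rintro ⟨σ, p⟩ ⟨τ, q⟩ h
  simp only at h
  have hpq : p = q := by
    apply (insertMax q τ).injective
    rw [insertMax_self, ← h, insertMax_self]
  subst hpq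
  congr 1
  ext i
  have := DFunLike.congr_fun h (p.succAbove i)
  simpa [Fin.ext_iff] using this

theorem insertMax_bijective (n : ℕ) :
    Function.Bijective fun x : Equiv.Perm (Fin n) × Fin (n + 1) => insertMax x.2 x.1 := by
  rw [Fintype.bijective_iff_injective_and_card]
  refine ⟨insertMax_injective n, ?_⟩
  simp [Fintype.card_perm, Nat.factorial_succ, mul_comm]

theorem castSucc_lt_iff_val_lt {n : ℕ} {i : Fin n} {p : Fin (n + 1)} :
    i.castSucc < p ↔ (i : ℕ) < p :=
  Iff.rfl

theorem isTop_insertMax_self {n : ℕ} (p : Fin (n + 1)) (σ : Equiv.Perm (Fin n)) :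
    IsTop (insertMax p σ) p ↔ HasInversionBefore σ p := by
  simp [IsTop, HasInversionBefore, Fin.exists_iff_succAbove p, Fin.succAbove_lt_iff_castSucc_lt,
    castSucc_lt_iff_val_lt]

theorem isTop_insertMax_succAbove {n : ℕ} (p : Fin (n + 1)) (σ : Equiv.Perm (Fin n))
    (i : Fin n) : IsTop (insertMax p σ) (p.succAbove i) ↔ IsTop σ i := by
  simp [IsTop, Fin.exists_iff_succAbove p, Fin.not_lt.2 (Fin.le_last _)]

theorem avoidsH_insertMax {n : ℕ} (p : Fin (n + 1)) (σ : Equiv.Perm (Fin n)) :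
    AvoidsH (insertMax p σ) ↔ AvoidsH σ ∧ ∀ i, IsTop σ i → (i : ℕ) < p := by
  simp only [avoidsH_iff, Fin.forall_iff_succAbove p, isTop_insertMax_succAbove]
  simp [Fin.not_lt.2 (Fin.le_last _), forall_and, and_comm,
    Fin.lt_succAbove_iff_le_castSucc, castSucc_lt_iff_val_lt]

/-- The number of ways to insert `m` successive new maxima into `σ` while avoiding
4213, 2413 and 2143. -/
noncomputable def extensionCount : (m : ℕ) → {n : ℕ} → Equiv.Perm (Fin n) → ℚ
  | 0, _, _ => 1
  | m + 1, n, σ => by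
    classical
    exact ∑ p : Fin (n + 1),
      if AvoidsH (insertMax p σ) then extensionCount m (insertMax p σ) else 0

open Classical in
theorem hCount_add (m n : ℕ) :
    (hCount (n + m) : ℚ) =
      ∑ σ : Equiv.Perm (Fin n), if AvoidsH σ then extensionCount m σ else 0 := by
  induction m generalizing n with
  | zero =>
    simp [hCount, extensionCount, Nat.card_eq_fintype_card, Fintype.card_subtype]
  | succ m ih =>
    rw [← add_assoc, add_right_comm, ih (n + 1),
      ← (insertMax_bijective n).sum_comp, Fintype.sum_prod_type]
    refine Finset.sum_congr rfl fun σ _ => ?_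
    split_ifs with h
    · rfl
    · refine Finset.sum_eq_zero fun p _ => if_neg fun h' => h ((avoidsH_insertMax p σ).1 h').1

/-- `σ` avoids 4213, 2413 and 2143, and `q - 1` is the position of the last top of a 213. -/
def LastTop {n : ℕ} (σ : Equiv.Perm (Fin n)) (q : ℕ) : Prop :=
  AvoidsH σ ∧ (∃ i : Fin n, (i : ℕ) + 1 = q ∧ IsTop σ i) ∧ ∀ i, IsTop σ i → (i : ℕ) < q

/-- `σ` avoids 213 and its initial increasing run has length `r`. -/
def InitialRun {n : ℕ} (σ : Equiv.Perm (Fin n)) (r : ℕ) : Prop :=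
  (∀ i, ¬ IsTop σ i) ∧ r ≤ n ∧ ∀ p ≤ n, HasInversionBefore σ p ↔ r < p

theorem LastTop.avoidsH_insertMax_iff {n q : ℕ} {σ : Equiv.Perm (Fin n)} (h : LastTop σ q)
    (p : Fin (n + 1)) : AvoidsH (insertMax p σ) ↔ q ≤ p := by
  obtain ⟨h1, ⟨i, rfl, hi⟩, h3⟩ := h
  rw [avoidsH_insertMax]
  exact ⟨fun h => h.2 i hi, fun h => ⟨h1, fun j hj => (h3 j hj).trans_le h⟩⟩

theorem lastTop_insertMax {n : ℕ} {σ : Equiv.Perm (Fin n)} {p : Fin (n + 1)}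
    (h : AvoidsH (insertMax p σ)) (hp : HasInversionBefore σ p) :
    LastTop (insertMax p σ) (p + 1) := by
  refine ⟨h, ⟨p, rfl, (isTop_insertMax_self p σ).2 hp⟩, ?_⟩
  rw [Fin.forall_iff_succAbove p]
  refine ⟨fun _ => Nat.lt_succ_self _, fun i hi => ?_⟩
  rw [isTop_insertMax_succAbove] at hi
  have := ((avoidsH_insertMax p σ).1 h).2 i hi
  rw [Fin.succAbove_of_castSucc_lt _ _ (by simpa [Fin.lt_def] using this)]
  simp
  omega

theorem LastTop.hasInversionBefore {n q p : ℕ} {σ : Equiv.Perm (Fin n)} (h : LastTop σ q)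
    (hp : q ≤ p) : HasInversionBefore σ p := by
  obtain ⟨-, ⟨i, rfl, a, b, hab, hbi, hba, -⟩, -⟩ := h
  exact ⟨a, b, hab, by omega, hba⟩

theorem InitialRun.avoidsH_insertMax {n r : ℕ} {σ : Equiv.Perm (Fin n)} (h : InitialRun σ r)
    (p : Fin (n + 1)) : AvoidsH (insertMax p σ) := by
  rw [PatternH.avoidsH_insertMax, avoidsH_iff]
  exact ⟨fun i hi => absurd hi (h.1 i), fun i hi => absurd hi (h.1 i)⟩

theorem InitialRun.insertMax {n r : ℕ} {σ : Equiv.Perm (Fin n)} (h : InitialRun σ r)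
    {p : Fin (n + 1)} (hp : (p : ℕ) ≤ r) : InitialRun (insertMax p σ) (p + 1) := by
  obtain ⟨h1, h2, h3⟩ := h
  have hno : ¬ HasInversionBefore σ p := by rw [h3 p (by omega)]; omega
  refine ⟨?_, by omega, fun x hx => ⟨?_, fun hlt => ?_⟩⟩
  · rw [Fin.forall_iff_succAbove p]
    simp only [isTop_insertMax_self, isTop_insertMax_succAbove]
    exact ⟨hno, h1⟩
  · rintro ⟨a, b, hab, hbx, hba⟩
    by_contra hxp
    obtain rfl | ⟨b, rfl⟩ := Fin.eq_self_or_eq_succAbove p b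
    · simp [Fin.not_lt.2 (Fin.le_last _)] at hba
    obtain rfl | ⟨a, rfl⟩ := Fin.eq_self_or_eq_succAbove p a
    · omega
    refine hno ⟨a, b, by simpa using hab, ?_, by simpa using hba⟩
    have hbp : p.succAbove b < p :=
      lt_of_le_of_ne (by rw [Fin.le_def]; omega) (Fin.succAbove_ne p b)
    rwa [Fin.succAbove_lt_iff_castSucc_lt] at hbp
  · have hne : (⟨p + 1, by omega⟩ : Fin (n + 1)) ≠ p := by simp [Fin.ext_iff]
    refine ⟨p, ⟨p + 1, by omega⟩, by simp [Fin.lt_def], hlt, ?_⟩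
    obtain ⟨b, hb⟩ := (Fin.exists_succAbove_eq hne)
    rw [← hb]
    simp [Fin.castSucc_lt_last]

theorem initialRun_zero (σ : Equiv.Perm (Fin 0)) : InitialRun σ 0 :=
  ⟨fun i => i.elim0, le_rfl, fun p hp => ⟨fun ⟨a, _⟩ => a.elim0, fun h => by omega⟩⟩

/-- Coefficients of the power series solving `λ = 1 / (1 - z) + z λ²`. -/
def kernelCoeff : ℕ → ℚ
  | 0 => 1
  | n + 1 => 1 + ∑ i : Fin (n + 1), kernelCoeff i * kernelCoeff (n - i)

/-- The power series `λ` with `λ = 1 / (1 - z) + z λ²`. -/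
noncomputable def kernelRoot : PowerSeries ℚ := PowerSeries.mk kernelCoeff

/-- The geometric series `1 / (1 - z)`. -/
noncomputable def geom : PowerSeries ℚ := PowerSeries.mk fun _ => 1

theorem one_sub_X_mul_geom : (1 - X) * geom = 1 := by
  rw [mul_comm]
  exact PowerSeries.mk_one_mul_one_sub_eq_one ℚ

theorem kernelRoot_eq : kernelRoot = geom + X * kernelRoot ^ 2 := by
  ext n
  cases n with
  | zero => simp [kernelRoot, geom, kernelCoeff]
  | succ n =>
    rw [map_add, PowerSeries.coeff_succ_X_mul, sq, PowerSeries.coeff_mul,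
      Finset.Nat.sum_antidiagonal_eq_sum_range_succ_mk, Finset.sum_range]
    simp [kernelRoot, geom, kernelCoeff]

theorem kernelRoot_quadratic : (1 - X) * kernelRoot = 1 + X * (1 - X) * kernelRoot ^ 2 := by
  linear_combination (1 - X) * kernelRoot_eq + one_sub_X_mul_geom

/-- The generating function of the extensions of an increasing permutation of length `r`. -/
noncomputable def runSeries (r : ℕ) : PowerSeries ℚ :=
  (2 - X)⁻¹ * (1 + kernelRoot ^ r * (1 - X * kernelRoot)⁻¹)

theorem two_sub_X_mul_inv : (2 - X : PowerSeries ℚ) * (2 - X)⁻¹ = 1 :=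
  PowerSeries.mul_inv_cancel _ (by
    rw [map_sub, PowerSeries.constantCoeff_X, map_ofNat]
    norm_num)

theorem one_sub_X_mul_kernelRoot_mul_inv :
    (1 - X * kernelRoot) * (1 - X * kernelRoot)⁻¹ = 1 :=
  PowerSeries.mul_inv_cancel _ (by simp)

theorem runSeries_zero : runSeries 0 = 1 + X * runSeries 1 := by
  have h2 := two_sub_X_mul_inv
  have h3 := one_sub_X_mul_kernelRoot_mul_inv
  simp only [runSeries]
  linear_combination (2 - X)⁻¹ * h3 + h2

theorem runSeries_succ (r : ℕ) :
    runSeries (r + 1) = geom * runSeries r + 1 - geom + X * runSeries (r + 2) := by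
  have h1 := one_sub_X_mul_geom
  have h2 := two_sub_X_mul_inv
  have hk := kernelRoot_eq
  simp only [runSeries]
  generalize (2 - X : PowerSeries ℚ)⁻¹ = c at *
  generalize (1 - X * kernelRoot)⁻¹ = d at *
  linear_combination (c * kernelRoot ^ r * d) * hk + (1 - geom) * h2 + c * h1

theorem geom_pow_succ (a : ℕ) : geom ^ (a + 1) = geom ^ a + X * geom ^ (a + 1) := by
  linear_combination geom ^ a * one_sub_X_mul_geom

theorem geom_pow_eq_sum (a : ℕ) :
    geom ^ a = 1 + X * ∑ j ∈ Finset.range a, geom ^ (j + 1) := by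
  induction a with
  | zero => simp
  | succ a ih => rw [Finset.sum_range_succ, mul_add, ← add_assoc, ← ih, ← geom_pow_succ]

theorem runSeries_eq_sum (r : ℕ) :
    runSeries r = 1 + X * ∑ p ∈ Finset.range (r + 1), geom ^ (r - p) * runSeries (p + 1) := by
  induction r with
  | zero => simpa using runSeries_zero
  | succ r ih =>
    have hsum : ∑ p ∈ Finset.range (r + 1), geom ^ (r + 1 - p) * runSeries (p + 1) =
        geom * ∑ p ∈ Finset.range (r + 1), geom ^ (r - p) * runSeries (p + 1) := by
      rw [Finset.mul_sum]
      refine Finset.sum_congr rfl fun p hp => ?_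
      rw [Nat.succ_sub (by simpa [Nat.lt_succ_iff] using hp), pow_succ]
      ring
    rw [Finset.sum_range_succ, hsum, runSeries_succ, Nat.sub_self]
    linear_combination geom * ih

theorem sum_fin_ite_le (n q : ℕ) (f : ℕ → ℚ) (hq : q ≤ n) :
    (∑ p : Fin (n + 1), if q ≤ (p : ℕ) then f (n - p) else 0) =
      ∑ j ∈ Finset.range (n + 1 - q), f j := by
  rw [Fin.sum_univ_eq_sum_range (fun p => if q ≤ p then f (n - p) else 0) (n + 1),
    ← Finset.sum_range_reflect, ← Finset.sum_filter]
  refine Finset.sum_congr ?_ fun j hj => ?_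
  · ext j
    simp
    omega
  · simp at hj
    congr 1
    omega

theorem extensionCount_of_lastTop {m n q : ℕ} {σ : Equiv.Perm (Fin n)} (h : LastTop σ q) :
    extensionCount m σ = PowerSeries.coeff m (geom ^ (n + 1 - q)) := by
  induction m generalizing n q with
  | zero => simp [extensionCount, geom]
  | succ m ih =>
    have hq : q ≤ n := by obtain ⟨-, ⟨i, rfl, -⟩, -⟩ := h; omega
    rw [geom_pow_eq_sum, extensionCount, map_add, PowerSeries.coeff_succ_X_mul, map_sum,
      ← sum_fin_ite_le n q (fun j => PowerSeries.coeff m (geom ^ (j + 1))) hq]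
    simp only [PowerSeries.coeff_one, Nat.succ_ne_zero, if_false, zero_add]
    refine Finset.sum_congr rfl fun p _ => ?_
    rw [h.avoidsH_insertMax_iff p]
    split_ifs with hp
    · rw [ih (lastTop_insertMax ((h.avoidsH_insertMax_iff p).2 hp) (h.hasInversionBefore hp))]
      congr 2
      omega
    · rfl

theorem geom_pow_mul_runSeries_eq_sum {n r : ℕ} (h : r ≤ n) :
    geom ^ (n - r) * runSeries r = 1 + X * ∑ p ∈ Finset.range (n + 1),
      if p ≤ r then geom ^ (n - p) * runSeries (p + 1) else geom ^ (n + 1 - p) := by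
  obtain ⟨b, rfl⟩ := Nat.exists_eq_add_of_le h
  have hrun : (∑ p ∈ Finset.range (r + 1), if p ≤ r then
      geom ^ (r + b - p) * runSeries (p + 1) else geom ^ (r + b + 1 - p)) =
      geom ^ b * ∑ p ∈ Finset.range (r + 1), geom ^ (r - p) * runSeries (p + 1) := by
    rw [Finset.mul_sum]
    refine Finset.sum_congr rfl fun p hp => ?_
    have hp : p ≤ r := by simpa [Nat.lt_succ_iff] using hp
    rw [if_pos hp, ← mul_assoc, ← pow_add]
    congr 2
    omega
  have htail : (∑ p ∈ Finset.range b, if r + 1 + p ≤ r then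
      geom ^ (r + b - (r + 1 + p)) * runSeries (r + 1 + p + 1)
      else geom ^ (r + b + 1 - (r + 1 + p))) = ∑ j ∈ Finset.range b, geom ^ (j + 1) := by
    rw [← Finset.sum_range_reflect]
    refine Finset.sum_congr rfl fun p hp => ?_
    have hp := Finset.mem_range.1 hp
    rw [if_neg (by omega)]
    congr 1
    omega
  rw [add_right_comm r b 1, Finset.sum_range_add, ← add_right_comm r b 1, hrun, htail,
    Nat.add_sub_cancel_left]
  linear_combination geom ^ b * runSeries_eq_sum r + geom_pow_eq_sum b

theorem extensionCount_of_initialRun {m n r : ℕ} {σ : Equiv.Perm (Fin n)}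
    (h : InitialRun σ r) :
    extensionCount m σ = PowerSeries.coeff m (geom ^ (n - r) * runSeries r) := by
  induction m generalizing n r with
  | zero => simp [geom_pow_mul_runSeries_eq_sum h.2.1, extensionCount]
  | succ m ih =>
    rw [geom_pow_mul_runSeries_eq_sum h.2.1, extensionCount, map_add,
      PowerSeries.coeff_succ_X_mul, map_sum, Finset.sum_range]
    simp only [PowerSeries.coeff_one, Nat.succ_ne_zero, if_false, zero_add]
    refine Finset.sum_congr rfl fun p _ => ?_
    rw [if_pos (h.avoidsH_insertMax p)]
    split_ifs with hp
    · rw [ih (h.insertMax hp), Nat.add_sub_add_right]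
    · rw [extensionCount_of_lastTop (lastTop_insertMax (h.avoidsH_insertMax p)
        ((h.2.2 p (by omega)).2 (by omega))), Nat.add_sub_add_right]

theorem hCount_eq_coeff (n : ℕ) : (hCount n : ℚ) = PowerSeries.coeff n (runSeries 0) := by
  have h := hCount_add n 0
  rw [zero_add, Fintype.sum_unique, extensionCount_of_initialRun (initialRun_zero _),
    if_pos ((avoidsH_iff _).2 fun i => i.elim0)] at h
  simpa using h

theorem runSeries_zero_mul : runSeries 0 * (1 - X * (1 - X) * kernelRoot) = 1 := by
  have h2 := two_sub_X_mul_inv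
  have h3 := one_sub_X_mul_kernelRoot_mul_inv
  simp only [runSeries, pow_zero, one_mul]
  generalize (2 - X : PowerSeries ℚ)⁻¹ = c at *
  generalize (1 - X * kernelRoot)⁻¹ = d at *
  linear_combination (c * (2 - X) - (1 - X * (1 - X) * kernelRoot) * c) * h3 + h2
    - c * d * X * kernelRoot_quadratic

end PatternH

theorem hCount_gf_algebraic :
    let z : PowerSeries ℚ := PowerSeries.X
    let H : PowerSeries ℚ := PowerSeries.mk fun n => if n = 0 then 0 else (hCount n : ℚ)
    z * (2 - z) * H ^ 2 - (1 - 3 * z + 2 * z ^ 2) * H + z * (1 - z) = 0 := by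
  intro z H
  have hH : H = PatternH.runSeries 0 - 1 := by
    ext n
    cases n with
    | zero =>
      rw [PatternH.runSeries_zero]
      simp [H]
    | succ n => simp [H, PatternH.hCount_eq_coeff, PowerSeries.coeff_one]
  have hinv := PatternH.runSeries_zero_mul
  have hquad : (1 - z) * PatternH.kernelRoot =
      1 + z * (1 - z) * PatternH.kernelRoot ^ 2 := PatternH.kernelRoot_quadratic
  rw [hH]
  generalize PatternH.runSeries 0 = Y at *
  generalize PatternH.kernelRoot = l at *
  change Y * (1 - z * (1 - z) * l) = 1 at hinv
  have hY : Y - 1 = z * (1 - z) * l * Y := by linear_combination hinv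
  have hone : (1 : PowerSeries ℚ) = (1 - z * (1 - z) * l) * Y := by linear_combination -hinv
  rw [hY]
  calc
    _ = z * (1 - z) * Y * (z * (2 - z) * (z * (1 - z)) * l ^ 2 * Y
          - (1 - 3 * z + 2 * z ^ 2) * l * 1) + z * (1 - z) * 1 * 1 := by ring
    _ = z * (1 - z) * Y * (z * (2 - z) * (z * (1 - z)) * l ^ 2 * Y
          - (1 - 3 * z + 2 * z ^ 2) * l * ((1 - z * (1 - z) * l) * Y))
          + z * (1 - z) * ((1 - z * (1 - z) * l) * Y) * ((1 - z * (1 - z) * l) * Y) := by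
      rw [← hone]
    _ = 0 := by linear_combination -z * (1 - z) * Y ^ 2 * hquad
end

section
/- For a permutation σ of length n avoiding 4213, 2413 and 2143, let top(σ) = n − max{k : k is an H-gridding cutoff of σ}. Then the average of top(σ) over all permutations σ of length n avoiding 4213, 2413 and 2143, divided by n, tends to 1/5 as n → ∞; that is, (∑_{σ ∈ Av_n(4213,2413,2143)} top(σ)) / (n · |Av_n(4213,2413,2143)|) → 1/5. -/
open Filter Topology PowerSeries

open Equiv Finset

/-- Position `c` plays the role of `3` in an occurrence of 213. -/
def IsThree {n : ℕ} (σ : Perm (Fin n)) (c : Fin n) : Prop :=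
  ∃ i j, i < j ∧ j < c ∧ σ j < σ i ∧ σ i < σ c

/-- There is a descent pair entirely to the left of the gap `p`. -/
def IsLate {n : ℕ} (σ : Perm (Fin n)) (p : Fin (n + 1)) : Prop :=
  ∃ i j : Fin n, i < j ∧ j.castSucc < p ∧ σ j < σ i

/-- A new maximum inserted in the gap `p` becomes a new `3`, to the right of all the others. -/
def IsActive {n : ℕ} (σ : Perm (Fin n)) (p : Fin (n + 1)) : Prop :=
  IsLate σ p ∧ ∀ c, IsThree σ c → c.castSucc < p

theorem avoidsH_iff {n : ℕ} (σ : Perm (Fin n)) :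
    AvoidsH σ ↔ ∀ c, IsThree σ c → ∀ d, σ c < σ d → c < d := by
  constructor
  · rintro ⟨h1, h2, h3⟩ c ⟨i, j, hij, hjc, hji, hic⟩ d hcd
    by_contra hdc
    have hd : d < c := lt_of_le_of_ne (not_lt.1 hdc) (by rintro rfl; exact lt_irrefl _ hcd)
    rcases lt_trichotomy d i with hdi | rfl | hdi
    · refine h1 ⟨![d, i, j, c], ?_, ?_⟩
      · simp only [Fin.strictMono_iff_lt_succ]
        simp [Fin.forall_fin_succ]
        grind
      · simp [Fin.forall_fin_succ, p4213]
        grind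
    · grind
    · rcases lt_trichotomy d j with hdj | rfl | hdj
      · refine h2 ⟨![i, d, j, c], ?_, ?_⟩
        · simp only [Fin.strictMono_iff_lt_succ]
          simp [Fin.forall_fin_succ]
          grind
        · simp [Fin.forall_fin_succ, p2413]
          grind
      · grind
      · refine h3 ⟨![i, j, d, c], ?_, ?_⟩
        · simp only [Fin.strictMono_iff_lt_succ]
          simp [Fin.forall_fin_succ]
          grind
        · simp [Fin.forall_fin_succ, p2143]
          grind
  · intro h
    refine ⟨?_, ?_, ?_⟩ <;> rintro ⟨f, hf, hv⟩
    · have := h (f 3) ⟨f 1, f 2, hf (by decide), hf (by decide), (hv 2 1).1 (by decide),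
        (hv 1 3).1 (by decide)⟩ (f 0) ((hv 3 0).1 (by decide))
      exact absurd (hf.lt_iff_lt.1 this) (by decide)
    · have := h (f 3) ⟨f 0, f 2, hf (by decide), hf (by decide), (hv 2 0).1 (by decide),
        (hv 0 3).1 (by decide)⟩ (f 1) ((hv 3 1).1 (by decide))
      exact absurd (hf.lt_iff_lt.1 this) (by decide)
    · have := h (f 3) ⟨f 0, f 1, hf (by decide), hf (by decide), (hv 1 0).1 (by decide),
        (hv 0 3).1 (by decide)⟩ (f 2) ((hv 3 2).1 (by decide))
      exact absurd (hf.lt_iff_lt.1 this) (by decide)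

/-- Membership in an upward closed set of `Fin m` is determined by its cardinality. -/
theorem mem_iff_le_add_card {m : ℕ} (U : Finset (Fin m))
    (hU : ∀ p q, p ∈ U → p ≤ q → q ∈ U) (p : Fin m) : p ∈ U ↔ m ≤ p + #U := by
  constructor
  · intro hp
    have : Finset.Ici p ⊆ U := fun q hq => hU p q hp (Finset.mem_Ici.1 hq)
    have := Finset.card_le_card this
    rw [Fin.card_Ici] at this
    omega
  · intro h
    by_contra hp
    have : U ⊆ Finset.Ioi p := fun q hq => Finset.mem_Ioi.2 (by
      by_contra hqp
      exact hp (hU q p hq (not_lt.1 hqp)))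
    have := Finset.card_le_card this
    rw [Fin.card_Ioi] at this
    omega

/-- Insert a new maximum in the gap `p`. -/
def insertMax {n : ℕ} (p : Fin (n + 1)) (τ : Perm (Fin n)) : Perm (Fin (n + 1)) :=
  (finSuccEquiv' p).trans ((optionCongr τ).trans (finSuccEquiv' (Fin.last n)).symm)

theorem insertMax_self {n : ℕ} (p : Fin (n + 1)) (τ : Perm (Fin n)) :
    insertMax p τ p = Fin.last n := by
  simp [insertMax]

theorem insertMax_succAbove {n : ℕ} (p : Fin (n + 1)) (τ : Perm (Fin n)) (i : Fin n) :
    insertMax p τ (p.succAbove i) = (τ i).castSucc := by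
  simp [insertMax]

theorem insertMax_bijective (n : ℕ) :
    Function.Bijective (fun x : Fin (n + 1) × Perm (Fin n) => insertMax x.1 x.2) := by
  rw [Fintype.bijective_iff_injective_and_card]
  constructor
  · rintro ⟨p, τ⟩ ⟨q, ρ⟩ h
    have hpq : p = q := by
      apply (insertMax q ρ).injective
      rw [insertMax_self, ← show insertMax p τ = insertMax q ρ from h, insertMax_self]
    subst hpq
    simp only [Prod.mk.injEq, true_and]
    ext i
    have := insertMax_succAbove p τ i
    rw [show insertMax p τ = insertMax p ρ from h, insertMax_succAbove] at this
    exact congrArg Fin.val (Fin.castSucc_injective _ this.symm)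
  · simp [Fintype.card_perm, Nat.factorial_succ]

theorem isThree_insertMax_self {n : ℕ} (p : Fin (n + 1)) (τ : Perm (Fin n)) :
    IsThree (insertMax p τ) p ↔ IsLate τ p := by
  constructor
  · rintro ⟨i, j, hij, hjp, hji, hi⟩
    obtain ⟨i, rfl⟩ := Fin.exists_succAbove_eq (hij.trans hjp).ne
    obtain ⟨j, rfl⟩ := Fin.exists_succAbove_eq hjp.ne
    rw [insertMax_succAbove, insertMax_succAbove] at hji
    exact ⟨i, j, Fin.succAbove_lt_succAbove_iff.1 hij,
      Fin.succAbove_lt_iff_castSucc_lt _ _ |>.1 hjp, by simpa using hji⟩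
  · rintro ⟨i, j, hij, hjp, hji⟩
    refine ⟨p.succAbove i, p.succAbove j, Fin.succAbove_lt_succAbove_iff.2 hij,
      (Fin.succAbove_lt_iff_castSucc_lt _ _).2 hjp, ?_, ?_⟩
    · simpa [insertMax_succAbove] using hji
    · simp [insertMax_succAbove, insertMax_self, Fin.castSucc_lt_last]

theorem isThree_insertMax_succAbove {n : ℕ} (p : Fin (n + 1)) (τ : Perm (Fin n)) (c : Fin n) :
    IsThree (insertMax p τ) (p.succAbove c) ↔ IsThree τ c := by
  constructor
  · rintro ⟨i, j, hij, hjp, hji, hi⟩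
    have hne : ∀ k, insertMax p τ k < insertMax p τ (p.succAbove c) → k ≠ p := by
      rintro k hk rfl
      rw [insertMax_self] at hk
      exact absurd hk (not_lt.2 (Fin.le_last _))
    obtain ⟨i, rfl⟩ := Fin.exists_succAbove_eq (hne i hi)
    obtain ⟨j, rfl⟩ := Fin.exists_succAbove_eq (hne j (hji.trans hi))
    simp only [insertMax_succAbove, Fin.castSucc_lt_castSucc_iff,
      Fin.succAbove_lt_succAbove_iff] at *
    exact ⟨i, j, hij, hjp, hji, hi⟩
  · rintro ⟨i, j, hij, hjp, hji, hi⟩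
    refine ⟨p.succAbove i, p.succAbove j, ?_⟩
    simpa only [insertMax_succAbove, Fin.castSucc_lt_castSucc_iff,
      Fin.succAbove_lt_succAbove_iff] using ⟨hij, hjp, hji, hi⟩

theorem avoidsH_insertMax {n : ℕ} (p : Fin (n + 1)) (τ : Perm (Fin n)) :
    AvoidsH (insertMax p τ) ↔ AvoidsH τ ∧ ∀ c, IsThree τ c → c.castSucc < p := by
  rw [avoidsH_iff, avoidsH_iff, Fin.forall_iff_succAbove p]
  simp only [isThree_insertMax_succAbove, Fin.forall_iff_succAbove p, insertMax_self,
    insertMax_succAbove, Fin.castSucc_lt_castSucc_iff, Fin.succAbove_lt_succAbove_iff,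
    Fin.castSucc_lt_last, Fin.succAbove_lt_iff_castSucc_lt, lt_irrefl, not_lt.2 (Fin.le_last _)]
  grind [Fin.castSucc_lt_last]

theorem IsLate.mono {n : ℕ} {σ : Perm (Fin n)} {p q : Fin (n + 1)} (h : IsLate σ p)
    (hpq : p ≤ q) : IsLate σ q := by
  obtain ⟨i, j, hij, hj, hv⟩ := h
  exact ⟨i, j, hij, hj.trans_le hpq, hv⟩

theorem IsThree.isLate {n : ℕ} {σ : Perm (Fin n)} {c : Fin n} (h : IsThree σ c)
    {p : Fin (n + 1)} (hp : c.castSucc < p) : IsLate σ p := by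
  obtain ⟨i, j, hij, hj, hv, -⟩ := h
  exact ⟨i, j, hij, (Fin.castSucc_lt_castSucc_iff.2 hj).trans hp, hv⟩

theorem IsActive.mono {n : ℕ} {σ : Perm (Fin n)} {p q : Fin (n + 1)} (h : IsActive σ p)
    (hpq : p ≤ q) : IsActive σ q :=
  ⟨h.1.mono hpq, fun c hc => (h.2 c hc).trans_le hpq⟩

open scoped Classical in
/-- The number of entries playing the role of `3` in an occurrence of 213. -/
noncomputable def threeCount {n : ℕ} (σ : Perm (Fin n)) : ℕ := #{c | IsThree σ c}

open scoped Classical in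
/-- The number of active gaps. -/
noncomputable def activeCount {n : ℕ} (σ : Perm (Fin n)) : ℕ := #{p | IsActive σ p}

theorem isActive_iff {n : ℕ} (σ : Perm (Fin n)) (p : Fin (n + 1)) :
    IsActive σ p ↔ (Fin.rev p : ℕ) < activeCount σ := by
  classical
  have := mem_iff_le_add_card ({p | IsActive σ p} : Finset (Fin (n + 1)))
    (by simpa using fun p q hp hpq => IsActive.mono hp hpq) p
  rw [Finset.mem_filter_univ] at this
  rw [this, activeCount, Fin.val_rev]
  omega

theorem threeCount_insertMax {n : ℕ} (p : Fin (n + 1)) (τ : Perm (Fin n)) [Decidable (IsLate τ p)] :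
    threeCount (insertMax p τ) = threeCount τ + if IsLate τ p then 1 else 0 := by
  classical
  simp only [threeCount, Finset.card_filter, Fin.sum_univ_succAbove _ p, isThree_insertMax_self,
    isThree_insertMax_succAbove]
  rw [add_comm]

theorem activeCount_insertMax_of_isActive {n : ℕ} (p : Fin (n + 1)) (τ : Perm (Fin n))
    (h : IsActive τ p) : activeCount (insertMax p τ) = (Fin.rev p : ℕ) + 1 := by
  classical
  have hp := (isThree_insertMax_self p τ).2 h.1
  have : ({q | IsActive (insertMax p τ) q} : Finset (Fin (n + 2))) = Finset.Ioi p.castSucc := by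
    ext q
    simp only [Finset.mem_filter_univ, Finset.mem_Ioi]
    constructor
    · exact fun hq => hq.2 p hp
    · refine fun hq => ⟨hp.isLate hq, fun c hc => ?_⟩
      rcases Fin.eq_self_or_eq_succAbove p c with rfl | ⟨c, rfl⟩
      · exact hq
      · rw [isThree_insertMax_succAbove] at hc
        refine lt_trans ?_ hq
        rw [Fin.castSucc_lt_castSucc_iff, Fin.succAbove_lt_iff_castSucc_lt]
        exact h.2 c hc
  rw [activeCount, this, Fin.card_Ioi]
  simp only [Fin.val_rev, Fin.val_castSucc]
  omega

theorem activeCount_insertMax_of_not_isLate {n : ℕ} (p : Fin (n + 1)) (τ : Perm (Fin n))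
    (hτ : ∀ c, ¬ IsThree τ c) (h : ¬ IsLate τ p) :
    activeCount (insertMax p τ) = (Fin.rev p : ℕ) := by
  classical
  have hno : ∀ c, ¬ IsThree (insertMax p τ) c := by
    intro c
    rcases Fin.eq_self_or_eq_succAbove p c with rfl | ⟨c, rfl⟩
    · rwa [isThree_insertMax_self]
    · rw [isThree_insertMax_succAbove]
      exact hτ c
  have : ({q | IsActive (insertMax p τ) q} : Finset (Fin (n + 2))) = Finset.Ioi p.succ := by
    ext q
    simp only [Finset.mem_filter_univ, Finset.mem_Ioi]
    constructor
    · rintro ⟨⟨i, j, hij, hj, hv⟩, -⟩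
      by_contra hq
      have hjp : j ≤ p := by
        rw [Fin.lt_def, Fin.le_def, Fin.val_castSucc, Fin.val_succ] at *
        omega
      obtain ⟨i, rfl⟩ := Fin.exists_succAbove_eq (hij.trans_le hjp).ne
      rcases hjp.eq_or_lt with rfl | hjp
      · rw [insertMax_self] at hv
        exact absurd hv (not_lt.2 (Fin.le_last _))
      · obtain ⟨j, rfl⟩ := Fin.exists_succAbove_eq hjp.ne
        rw [insertMax_succAbove, insertMax_succAbove] at hv
        exact h ⟨i, j, Fin.succAbove_lt_succAbove_iff.1 hij,
          (Fin.succAbove_lt_iff_castSucc_lt _ _).1 hjp, by simpa using hv⟩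
    · intro hq
      have hlt : (p : ℕ) + 1 < n + 1 := by
        rw [Fin.lt_def, Fin.val_succ] at hq
        omega
      refine ⟨⟨p, ⟨p + 1, hlt⟩, ?_, ?_, ?_⟩, fun c hc => absurd hc (hno c)⟩
      · simp [Fin.lt_def]
      · simpa [Fin.lt_def] using hq
      · rw [insertMax_self]
        refine lt_of_le_of_ne (Fin.le_last _) fun he => ?_
        rw [← insertMax_self p τ] at he
        have := congrArg Fin.val ((insertMax p τ).injective he)
        simp at this
  rw [activeCount, this, Fin.card_Ioi]
  simp [Fin.val_rev]

open scoped Classical in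
/-- Sum of a function of `(threeCount, activeCount)` over the class. -/
noncomputable def classSum (n : ℕ) (φ : ℕ → ℕ → ℝ) : ℝ :=
  ∑ σ : Perm (Fin n), if AvoidsH σ then φ (threeCount σ) (activeCount σ) else 0

theorem activeCount_le {n : ℕ} (σ : Perm (Fin n)) : activeCount σ ≤ n := by
  by_contra h
  have := (isActive_iff σ 0).2 (by simp; omega)
  obtain ⟨⟨i, j, -, hj, -⟩, -⟩ := this
  exact absurd hj (not_lt.2 (Fin.zero_le _))

theorem threeCount_le {n : ℕ} (σ : Perm (Fin n)) : threeCount σ ≤ n := by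
  classical
  simpa [threeCount] using Finset.card_le_univ ({c | IsThree σ c} : Finset (Fin n))

theorem threeCount_eq_zero_iff {n : ℕ} (σ : Perm (Fin n)) :
    threeCount σ = 0 ↔ ∀ c, ¬ IsThree σ c := by
  classical
  simp [threeCount, Finset.filter_eq_empty_iff]

theorem classSum_succ (n : ℕ) (φ : ℕ → ℕ → ℝ) :
    classSum (n + 1) φ = classSum n fun t s => ∑ q ∈ range (n + 1),
      if q < s then φ (t + 1) (q + 1) else if t = 0 then φ 0 q else 0 := by
  classical
  rw [classSum, ← (Equiv.ofBijective _ (insertMax_bijective n)).sum_comp, Fintype.sum_prod_type,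
    Finset.sum_comm, classSum]
  refine Finset.sum_congr rfl fun τ _ => ?_
  by_cases hτ : AvoidsH τ
  swap
  · rw [if_neg hτ]
    exact Finset.sum_eq_zero fun p _ => if_neg fun h => hτ ((avoidsH_insertMax p τ).1 h).1
  rw [if_pos hτ]
  rw [← Fin.sum_univ_eq_sum_range fun q => if q < activeCount τ then φ (threeCount τ + 1) (q + 1)
    else if threeCount τ = 0 then φ 0 q else 0, ← Equiv.sum_comp Fin.revPerm fun q : Fin (n + 1) =>
    if (q : ℕ) < activeCount τ then φ (threeCount τ + 1) (q + 1)
    else if threeCount τ = 0 then φ 0 q else 0]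
  refine Finset.sum_congr rfl fun p _ => ?_
  simp only [Equiv.ofBijective_apply, Fin.revPerm_apply]
  by_cases hp : IsActive τ p
  · rw [if_pos ((isActive_iff τ p).1 hp), if_pos ((avoidsH_insertMax p τ).2 ⟨hτ, hp.2⟩),
      threeCount_insertMax, if_pos hp.1, activeCount_insertMax_of_isActive p τ hp]
  · rw [if_neg fun h => hp ((isActive_iff τ p).2 h)]
    by_cases h0 : ∀ c, ¬ IsThree τ c
    · have hl : ¬ IsLate τ p := fun hl => hp ⟨hl, fun c hc => absurd hc (h0 c)⟩
      rw [if_pos ((threeCount_eq_zero_iff τ).2 h0),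
        if_pos ((avoidsH_insertMax p τ).2 ⟨hτ, fun c hc => absurd hc (h0 c)⟩),
        threeCount_insertMax, if_neg hl, activeCount_insertMax_of_not_isLate p τ h0 hl,
        (threeCount_eq_zero_iff τ).2 h0]
    · rw [if_neg fun h => h0 ((threeCount_eq_zero_iff τ).1 h), if_neg]
      rw [avoidsH_insertMax]
      rintro ⟨-, h⟩
      push Not at h0
      obtain ⟨c, hc⟩ := h0
      exact hp ⟨hc.isLate (h c hc), h⟩

theorem classSum_zero (φ : ℕ → ℕ → ℝ) : classSum 0 φ = φ 0 0 := by
  classical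
  have h : ∀ σ : Perm (Fin 0), AvoidsH σ := fun σ => (avoidsH_iff σ).2 fun c => c.elim0
  have ht : ∀ σ : Perm (Fin 0), threeCount σ = 0 := fun σ =>
    (threeCount_eq_zero_iff σ).2 fun c => c.elim0
  have ha : ∀ σ : Perm (Fin 0), activeCount σ = 0 := fun σ =>
    Nat.le_zero.1 (activeCount_le σ)
  simp [classSum, h, ht, ha]

theorem topPts_eq_threeCount {n : ℕ} (σ : Perm (Fin n)) (hσ : AvoidsH σ) :
    topPts σ = threeCount σ := by
  classical
  rw [avoidsH_iff] at hσ
  have hup : ∀ c d, IsThree σ c → σ c ≤ σ d → IsThree σ d := by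
    intro c d hc hcd
    rcases hcd.eq_or_lt with h | h
    · rwa [← σ.injective h]
    · obtain ⟨i, j, hij, hj, hv, hi⟩ := hc
      exact ⟨i, j, hij, hj.trans (hσ c ⟨i, j, hij, hj, hv, hi⟩ d h), hv, hi.trans h⟩
  have hmem : ∀ c, IsThree σ c ↔ n ≤ (σ c : ℕ) + threeCount σ := by
    intro c
    have := mem_iff_le_add_card (Finset.map σ.toEmbedding {c | IsThree σ c})
      (by
        intro p q hp hpq
        simp only [Finset.mem_map_equiv, Finset.mem_filter_univ] at hp ⊢
        exact hup _ _ hp (by simpa using hpq)) (σ c)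
    rw [Finset.card_map] at this
    simpa [threeCount] using this
  have hle := threeCount_le σ
  have hgr : IsGreatest {k | HGridding σ k} (n - threeCount σ) := by
    refine ⟨⟨Nat.sub_le _ _, fun i j hij hi hj => ?_, ?_⟩, ?_⟩
    · by_contra h
      have hlt : σ j < σ i :=
        lt_of_le_of_ne (not_lt.1 h) fun he => hij.ne' (σ.injective he)
      exact absurd hij (not_lt.2 (hσ j ((hmem j).2 (by omega)) i hlt).le)
    · rintro ⟨f, hf, hk, hv⟩
      have := (hmem (f 2)).1 ⟨f 0, f 1, hf (by decide), hf (by decide), (hv 1 0).1 (by decide),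
        (hv 0 2).1 (by decide)⟩
      have := hk 2
      omega
    · rintro k ⟨hkn, -, hk⟩
      by_contra hlt
      have hm : n - threeCount σ < n := by omega
      obtain ⟨c, hc⟩ := σ.surjective ⟨n - threeCount σ, hm⟩
      have hcv : (σ c : ℕ) = n - threeCount σ := by rw [hc]
      obtain ⟨i, j, hij, hj, hv, hi⟩ := (hmem c).2 (by omega)
      refine hk ⟨![i, j, c], ?_, ?_, ?_⟩
      · simp only [Fin.strictMono_iff_lt_succ]
        simp [Fin.forall_fin_succ]
        grind
      · simp [Fin.forall_fin_succ]
        grind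
      · simp [Fin.forall_fin_succ, p213]
        grind
  rw [topPts, hgr.csSup_eq]
  omega

open scoped Classical in
theorem sum_topPts_eq_classSum (n : ℕ) :
    (∑ σ : Perm (Fin n), if AvoidsH σ then (topPts σ : ℝ) else 0) =
      classSum n fun t _ => (t : ℝ) := by
  refine Finset.sum_congr rfl fun σ _ => ?_
  split_ifs with h
  · rw [topPts_eq_threeCount σ h]
  · rfl

theorem hCount_eq_classSum (n : ℕ) : (hCount n : ℝ) = classSum n fun _ _ => 1 := by
  classical
  simp [hCount, classSum, Nat.card_eq_fintype_card, Fintype.card_subtype]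

theorem classSum_congr {n : ℕ} {φ ψ : ℕ → ℕ → ℝ} (h : ∀ t s, s ≤ n → φ t s = ψ t s) :
    classSum n φ = classSum n ψ := by
  refine Finset.sum_congr rfl fun σ _ => ?_
  rw [h _ _ (activeCount_le σ)]

/-- Sum of a function of `activeCount` over the permutations of the class with `m` entries
playing the role of `3`. -/
noncomputable def levelSum (n m : ℕ) (g : ℕ → ℝ) : ℝ :=
  classSum n fun t s => if t = m then g s else 0

theorem levelSum_zero_zero (g : ℕ → ℝ) : levelSum 0 0 g = g 0 := by
  simp [levelSum, classSum_zero]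

theorem levelSum_succ_succ (n m : ℕ) (g : ℕ → ℝ) :
    levelSum (n + 1) (m + 1) g = levelSum n m fun s => ∑ q ∈ range s, g (q + 1) := by
  rw [levelSum, classSum_succ, levelSum]
  refine classSum_congr fun t s hs => ?_
  have hr : (range (n + 1)).filter (· < s) = range s := by
    ext q
    simp only [Finset.mem_filter, Finset.mem_range]
    omega
  rw [← hr, Finset.sum_filter]
  by_cases ht : t = m <;> simp [ht]

theorem levelSum_succ_zero (n : ℕ) (g : ℕ → ℝ) :
    levelSum (n + 1) 0 g =
      levelSum n 0 fun s => ∑ q ∈ range (n + 1), if q < s then 0 else g q := by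
  rw [levelSum, classSum_succ, levelSum]
  refine classSum_congr fun t s hs => ?_
  by_cases ht : t = 0 <;> simp [ht]

theorem classSum_eq_sum_levelSum (n : ℕ) (f : ℕ → ℝ) :
    (classSum n fun t _ => f t) = ∑ m ∈ range (n + 1), f m * levelSum n m fun _ => 1 := by
  classical
  simp only [levelSum, classSum, Finset.mul_sum]
  rw [Finset.sum_comm]
  refine Finset.sum_congr rfl fun σ _ => ?_
  have := threeCount_le σ
  by_cases h : AvoidsH σ
  · simp [h, this]
  · simp [h]

theorem sum_multichoose_succ (s j : ℕ) :
    ∑ q ∈ range s, (q + 1).multichoose j = s.multichoose (j + 1) := by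
  induction s with
  | zero => simp
  | succ s ih => rw [Finset.sum_range_succ, ih, Nat.multichoose_succ_succ]

theorem levelSum_add_multichoose (n m j : ℕ) :
    (levelSum (n + m) m fun s => (s.multichoose j : ℝ)) =
      levelSum n 0 fun s => (s.multichoose (j + m) : ℝ) := by
  induction m generalizing j with
  | zero => rfl
  | succ m ih =>
    rw [← add_assoc, levelSum_succ_succ]
    simp only [← Nat.cast_sum, sum_multichoose_succ]
    rw [ih, add_right_comm, add_assoc]

theorem multichoose_succ_mul (s t : ℕ) :
    (t + 1) * s.multichoose (t + 1) = (s + t) * s.multichoose t := by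
  cases s with
  | zero => cases t <;> simp
  | succ s =>
    rw [Nat.multichoose_eq, Nat.multichoose_eq]
    have := Nat.add_one_mul_choose_eq (s + t) t
    rw [show s + 1 + (t + 1) - 1 = s + t + 1 by omega, show s + 1 + t - 1 = s + t by omega,
      show s + 1 + t = s + t + 1 by omega]
    linarith

/-- The Catalan generating function over `ℝ`. -/
noncomputable def catalanReal : ℝ⟦X⟧ := PowerSeries.map (Nat.castRingHom ℝ) catalanSeries

theorem catalanReal_eq : catalanReal = 1 + X * catalanReal ^ 2 := by
  have := congrArg (PowerSeries.map (Nat.castRingHom ℝ)) catalanSeries_sq_mul_X_add_one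
  simp only [map_add, map_mul, map_pow, map_one, PowerSeries.map_X] at this
  rw [catalanReal]
  linear_combination -this

/-- Ballot numbers, as coefficients of powers of the Catalan series. -/
noncomputable def ballot (r s : ℕ) : ℝ := coeff s (catalanReal ^ r)

theorem ballot_zero_succ (s : ℕ) : ballot 0 (s + 1) = 0 := by
  simp [ballot, PowerSeries.coeff_one]

theorem ballot_zero_right (r : ℕ) : ballot r 0 = 1 := by
  have h : constantCoeff catalanReal = 1 := by
    rw [catalanReal_eq]
    simp
  simp [ballot, h]

theorem ballot_succ_succ (r s : ℕ) :
    ballot (r + 1) (s + 1) = ballot r (s + 1) + ballot (r + 2) s := by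
  have h : catalanReal ^ (r + 1) = catalanReal ^ r + X * catalanReal ^ (r + 2) := by
    linear_combination catalanReal ^ r * catalanReal_eq
  rw [ballot, h, map_add, coeff_succ_X_mul, ballot, ballot]

theorem sum_ballot (k s : ℕ) (h : s ≤ k) :
    ∑ i ∈ range (s + 1), ballot (k - i) i = ballot (k + 1 - s) s := by
  induction s with
  | zero => simp [ballot_zero_right]
  | succ s ih =>
    obtain ⟨r, rfl⟩ := Nat.exists_eq_add_of_le h
    rw [Finset.sum_range_succ, ih (by omega), show s + 1 + r + 1 - s = r + 2 by omega,
      show s + 1 + r - (s + 1) = r by omega, show s + 1 + r + 1 - (s + 1) = r + 1 by omega,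
      ballot_succ_succ]
    ring

theorem levelSum_zero_eq (k : ℕ) (g : ℕ → ℝ) :
    levelSum k 0 g = ∑ s ∈ range (k + 1), ballot (k - s) s * g s := by
  induction k generalizing g with
  | zero => simp [levelSum_zero_zero, ballot_zero_right]
  | succ k ih =>
    rw [levelSum_succ_zero, ih, Finset.sum_range_succ _ (k + 1), Nat.sub_self, ballot_zero_succ,
      zero_mul, add_zero]
    simp only [Finset.mul_sum]
    rw [Finset.sum_comm]
    refine Finset.sum_congr rfl fun q hq => ?_
    rw [Finset.mem_range] at hq
    rw [← sum_ballot k q (by omega), Finset.sum_mul]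
    have hr : (range (k + 1)).filter (¬ q < ·) = range (q + 1) := by
      ext i
      simp only [Finset.mem_filter, Finset.mem_range]
      omega
    rw [← hr, Finset.sum_filter]
    refine Finset.sum_congr rfl fun i _ => ?_
    by_cases h : q < i <;> simp [h]

/-- Weighted sum over the triples `(r, s, t)` with `r + s + t = n` that encode the class. -/
noncomputable def tripleSum (n : ℕ) (w : ℕ → ℕ → ℕ → ℝ) : ℝ :=
  ∑ x ∈ antidiagonal n, ∑ y ∈ antidiagonal x.1,
    w y.1 y.2 x.2 * (ballot y.1 y.2 * (y.2.multichoose x.2 : ℝ))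

theorem classSum_eq_tripleSum (n : ℕ) (f : ℕ → ℝ) :
    (classSum n fun t _ => f t) = tripleSum n fun _ _ t => f t := by
  rw [classSum_eq_sum_levelSum, tripleSum, ← Finset.Nat.sum_antidiagonal_swap,
    Finset.Nat.sum_antidiagonal_eq_sum_range_succ_mk]
  refine Finset.sum_congr rfl fun m hm => ?_
  have hm : m ≤ n := Nat.lt_succ_iff.1 (Finset.mem_range.1 hm)
  obtain ⟨k, rfl⟩ := Nat.exists_eq_add_of_le' hm
  have := levelSum_add_multichoose k m 0
  simp only [Nat.multichoose_zero_right, Nat.cast_one, zero_add] at this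
  simp only [Prod.swap_prod_mk, Nat.add_sub_cancel]
  rw [this, levelSum_zero_eq, ← Finset.mul_sum, ← Finset.Nat.sum_antidiagonal_swap,
    Finset.Nat.sum_antidiagonal_eq_sum_range_succ_mk]
  rfl

theorem classSum_top_succ (n : ℕ) :
    (classSum (n + 1) fun t _ => (t : ℝ)) =
      n * (classSum n fun _ _ => 1) - tripleSum n fun r _ _ => (r : ℝ) := by
  rw [classSum_eq_tripleSum, classSum_eq_tripleSum n fun _ => 1, tripleSum,
    Finset.Nat.antidiagonal_succ']
  simp only [Finset.sum_cons, Finset.sum_map, tripleSum, Finset.mul_sum, ← Finset.sum_sub_distrib]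
  simp only [Nat.cast_zero, zero_mul, Finset.sum_const_zero, zero_add,
    Function.Embedding.coe_prodMap, Prod.map_fst, Prod.map_snd, Function.Embedding.refl_apply,
    Function.Embedding.coeFn_mk]
  refine Finset.sum_congr rfl fun x hx => Finset.sum_congr rfl fun y hy => ?_
  rw [HasAntidiagonal.mem_antidiagonal] at hx hy
  have h : ((x.2 : ℝ) + 1) * (y.2.multichoose (x.2 + 1) : ℝ) =
      ((y.2 : ℝ) + x.2) * (y.2.multichoose x.2 : ℝ) := by
    exact_mod_cast multichoose_succ_mul y.2 x.2
  have hn : (n : ℝ) = y.1 + y.2 + x.2 := by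
    rw [← hx, ← hy]
    push_cast
    ring
  rw [hn]
  simp only [Nat.succ_eq_add_one, Nat.cast_add, Nat.cast_one]
  linear_combination ballot y.1 y.2 * h

/-- The series `X / (1 - X)`. -/
noncomputable def geomSeries : ℝ⟦X⟧ := X * PowerSeries.mk 1

theorem one_sub_X_mul_geomSeries : (1 - X) * geomSeries = X := by
  have : (PowerSeries.mk 1 : ℝ⟦X⟧) * (1 - X) = 1 := mk_one_mul_one_sub_eq_one ℝ
  rw [geomSeries]
  linear_combination X * this

theorem hasSubst_geomSeries : HasSubst geomSeries :=
  HasSubst.of_constantCoeff_zero' (by simp [geomSeries])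

theorem coeff_mk_one_pow (s t : ℕ) :
    coeff t ((PowerSeries.mk 1 : ℝ⟦X⟧) ^ s) = (s.multichoose t : ℝ) := by
  cases s with
  | zero => cases t <;> simp [PowerSeries.coeff_one]
  | succ s =>
    rw [mk_one_pow_eq_mk_choose_add, coeff_mk, Nat.multichoose_eq,
      show s + 1 + t - 1 = s + t by omega, Nat.choose_symm_add]

/-- The Catalan series at `X / (1 - X)`. -/
noncomputable def dSeries : ℝ⟦X⟧ := catalanReal.subst geomSeries

theorem coeff_dSeries_pow (r m : ℕ) : coeff m (dSeries ^ r) =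
    ∑ x ∈ antidiagonal m, ballot r x.1 * (x.1.multichoose x.2 : ℝ) := by
  rw [dSeries, ← subst_pow hasSubst_geomSeries, coeff_subst' hasSubst_geomSeries,
    Finset.Nat.sum_antidiagonal_eq_sum_range_succ_mk, finsum_eq_sum_of_support_subset]
  · refine Finset.sum_congr rfl fun s hs => ?_
    rw [geomSeries, mul_pow, coeff_X_pow_mul', if_pos (Nat.lt_succ_iff.1 (Finset.mem_range.1 hs)),
      coeff_mk_one_pow, smul_eq_mul, ballot]
  · intro s hs
    by_contra h
    apply hs
    simp only [Finset.coe_range, Set.mem_Iio, not_lt] at h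
    simp only [geomSeries, mul_pow, coeff_X_pow_mul', if_neg (show ¬ s ≤ m by omega), smul_zero]

theorem dSeries_eq : (1 - X) * dSeries = (1 - X) + X * dSeries ^ 2 := by
  have h := congrArg (fun f => subst geomSeries f) catalanReal_eq
  simp only [subst_add hasSubst_geomSeries, subst_mul hasSubst_geomSeries,
    subst_pow hasSubst_geomSeries, subst_X hasSubst_geomSeries] at h
  rw [← coe_substAlgHom hasSubst_geomSeries, map_one, coe_substAlgHom] at h
  change dSeries = 1 + geomSeries * dSeries ^ 2 at h
  linear_combination (1 - X) * h + dSeries ^ 2 * one_sub_X_mul_geomSeries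

theorem coeff_X_mul_dSeries_pow (n r : ℕ) : coeff n ((X * dSeries) ^ r) =
    if r ≤ n then coeff (n - r) (dSeries ^ r) else 0 := by
  rw [mul_pow, coeff_X_pow_mul']

theorem tripleSum_eq (n : ℕ) (w : ℕ → ℝ) :
    (tripleSum n fun r _ _ => w r) =
      ∑ r ∈ range (n + 1), w r * coeff n ((X * dSeries) ^ r) := by
  have h : ∀ r ∈ range (n + 1), w r * coeff n ((X * dSeries) ^ r) =
      w r * coeff (n - r) (dSeries ^ r) := by
    intro r hr
    rw [coeff_X_mul_dSeries_pow, if_pos (Nat.lt_succ_iff.1 (Finset.mem_range.1 hr))]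
  rw [Finset.sum_congr rfl h, ← Finset.Nat.sum_antidiagonal_eq_sum_range_succ_mk
    (fun x => w x.1 * coeff x.2 (dSeries ^ x.1)) n]
  simp only [tripleSum, coeff_dSeries_pow, Finset.mul_sum]
  rw [Finset.sum_sigma', Finset.sum_sigma']
  refine Finset.sum_nbij' (fun x => ⟨(x.2.1, x.2.2 + x.1.2), (x.2.2, x.1.2)⟩)
    (fun x => ⟨(x.1.1 + x.2.1, x.2.2), (x.1.1, x.2.1)⟩) ?_ ?_ ?_ ?_ ?_ <;>
  · rintro ⟨⟨a, b⟩, ⟨c, d⟩⟩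
    simp only [Finset.mem_sigma, HasAntidiagonal.mem_antidiagonal]
    grind

/-- The generating function of the class. -/
noncomputable def hSeries : ℝ⟦X⟧ := (1 - X * dSeries)⁻¹

theorem hSeries_eq : hSeries = 1 + X * dSeries * hSeries := by
  have : (1 - X * dSeries) * hSeries = 1 := PowerSeries.mul_inv_cancel _ (by simp)
  linear_combination this

theorem hSeries_quadratic :
    (1 + X) * hSeries = 1 + (2 * X - X ^ 2) * hSeries ^ 2 := by
  linear_combination X * hSeries ^ 2 * dSeries_eq +
    ((1 - X) * hSeries - (X * dSeries * hSeries + hSeries - 1)) * hSeries_eq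

theorem coeff_X_mul_dSeries_pow_mul (n : ℕ) (f : ℝ⟦X⟧) :
    coeff n ((X * dSeries) ^ (n + 1) * f) = 0 := by
  rw [mul_pow, mul_assoc, coeff_X_pow_mul', if_neg (by omega)]

theorem hSeries_expansion (N : ℕ) :
    hSeries = ∑ r ∈ range N, (X * dSeries) ^ r + (X * dSeries) ^ N * hSeries := by
  induction N with
  | zero => simp
  | succ N ih =>
    rw [Finset.sum_range_succ]
    linear_combination ih + (X * dSeries) ^ N * hSeries_eq

theorem hSeries_sq_expansion (N : ℕ) :
    hSeries ^ 2 = ∑ r ∈ range N, C ((r : ℝ) + 1) * (X * dSeries) ^ r +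
      (X * dSeries) ^ N * (hSeries ^ 2 + (N : ℝ⟦X⟧) * hSeries) := by
  induction N with
  | zero => simp
  | succ N ih =>
    rw [Finset.sum_range_succ, map_add, map_natCast, map_one, Nat.cast_succ]
    linear_combination ih + (X * dSeries) ^ N * (hSeries + N + 1) * hSeries_eq

theorem coeff_hSeries (n : ℕ) : coeff n hSeries = hCount n := by
  rw [hCount_eq_classSum, classSum_eq_tripleSum n fun _ => 1, tripleSum_eq n fun _ => 1,
    hSeries_expansion (n + 1), map_add, coeff_X_mul_dSeries_pow_mul, map_sum]
  simp

theorem coeff_hSeries_sq (n : ℕ) :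
    coeff n (hSeries ^ 2) = (tripleSum n fun r _ _ => (r : ℝ)) + hCount n := by
  rw [hCount_eq_classSum, classSum_eq_tripleSum n fun _ => 1, tripleSum_eq n fun _ => 1,
    tripleSum_eq, hSeries_sq_expansion (n + 1), map_add, coeff_X_mul_dSeries_pow_mul, map_sum,
    ← Finset.sum_add_distrib, add_zero]
  refine Finset.sum_congr rfl fun r _ => ?_
  rw [coeff_C_mul]
  ring

open scoped Classical in
theorem sum_topPts_succ (n : ℕ) :
    (∑ σ : Perm (Fin (n + 1)), if AvoidsH σ then (topPts σ : ℝ) else 0) =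
      (n + 1) * hCount n - coeff n (hSeries ^ 2) := by
  rw [sum_topPts_eq_classSum, classSum_top_succ, coeff_hSeries_sq, hCount_eq_classSum]
  ring

theorem hCount_add_hCount (n : ℕ) : (hCount (n + 2) : ℝ) + hCount (n + 1) =
    2 * coeff (n + 1) (hSeries ^ 2) - coeff n (hSeries ^ 2) := by
  have h := congrArg (coeff (n + 2)) hSeries_quadratic
  have e : (2 * X - X ^ 2) * hSeries ^ 2 =
    X * (C (2 : ℝ) * hSeries ^ 2) - X * (X * hSeries ^ 2) := by
    rw [show (C (2 : ℝ) : ℝ⟦X⟧) = 2 from map_ofNat _ 2]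
    ring
  rw [e, add_mul, one_mul] at h
  simpa [coeff_hSeries, coeff_succ_X_mul, PowerSeries.coeff_one] using h

/-- The difference `2 h (n + 1) - h n`, which satisfies a three-term recurrence. -/
noncomputable def hDiff (n : ℕ) : ℝ := 2 * hCount (n + 1) - hCount n

theorem hDiff_rec (n : ℕ) :
    ((n : ℝ) + 4) * hDiff (n + 2) = (6 * n + 15) * hDiff (n + 1) - 5 * (n + 1) * hDiff n := by
  set Q : ℝ⟦X⟧ := 1 + X - 2 * (2 * X - X ^ 2) * hSeries with hQ
  have hsq : Q ^ 2 = 1 - 6 * X + 5 * X ^ 2 := by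
    rw [hQ]
    linear_combination (-4) * (2 * X - X ^ 2) * hSeries_quadratic
  have hc (m : ℕ) : coeff (m + 2) Q = -2 * hDiff m := by
    have e : Q = 1 + X - X * (C (4 : ℝ) * hSeries) + X * (X * (C (2 : ℝ) * hSeries)) := by
      rw [hQ, show (C (2 : ℝ) : ℝ⟦X⟧) = 2 from map_ofNat _ 2,
        show (C (4 : ℝ) : ℝ⟦X⟧) = 4 from map_ofNat _ 4]
      ring
    rw [e]
    simp only [map_add, map_sub, coeff_succ_X_mul, coeff_C_mul, coeff_hSeries,
      PowerSeries.coeff_one, PowerSeries.coeff_X, hDiff]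
    simp
    ring
  have hd := congrArg (d⁄dX ℝ) hsq
  have h6 : d⁄dX ℝ (6 : ℝ⟦X⟧) = 0 := by
    rw [← show (C (6 : ℝ) : ℝ⟦X⟧) = 6 from map_ofNat _ 6, derivative_C]
  have h5 : d⁄dX ℝ (5 : ℝ⟦X⟧) = 0 := by
    rw [← show (C (5 : ℝ) : ℝ⟦X⟧) = 5 from map_ofNat _ 5, derivative_C]
  simp only [derivative_pow, map_add, map_sub, Derivation.leibniz, derivative_X, h6, h5,
    Derivation.map_one_eq_zero, smul_eq_mul] at hd
  have h2 : (C (2 : ℝ) : ℝ⟦X⟧) = 2 := map_ofNat _ 2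
  have hode : d⁄dX ℝ Q - X * (C 6 * d⁄dX ℝ Q) + X * (X * (C 5 * d⁄dX ℝ Q)) =
      X * (C 5 * Q) - C 3 * Q := by
    have : (C (2 : ℝ) : ℝ⟦X⟧) ≠ 0 := by simp
    apply mul_left_cancel₀ this
    rw [h2, show (C (6 : ℝ) : ℝ⟦X⟧) = 6 from map_ofNat _ 6,
      show (C (5 : ℝ) : ℝ⟦X⟧) = 5 from map_ofNat _ 5,
      show (C (3 : ℝ) : ℝ⟦X⟧) = 3 from map_ofNat _ 3]
    push_cast at hd
    linear_combination Q * hd - 2 * d⁄dX ℝ Q * hsq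
  have h := congrArg (coeff (n + 3)) hode
  simp only [map_add, map_sub, coeff_succ_X_mul, coeff_C_mul, coeff_derivative] at h
  rw [show n + 3 + 1 = n + 2 + 2 by rfl, hc, show n + 2 + 1 = n + 1 + 2 by rfl, hc, hc] at h
  push_cast at h
  linarith

theorem hCount_zero : (hCount 0 : ℝ) = 1 := by
  rw [hCount_eq_classSum, classSum_zero]

theorem hCount_one : (hCount 1 : ℝ) = 1 := by
  rw [hCount_eq_classSum, classSum_succ, classSum_zero]
  simp

theorem hCount_two : (hCount 2 : ℝ) = 2 := by
  rw [hCount_eq_classSum, classSum_succ, classSum_succ, classSum_zero]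
  norm_num [Finset.sum_range_succ]

theorem hDiff_bounds (n : ℕ) : 0 < hDiff n ∧ hDiff (n + 1) ≤ 5 * hDiff n ∧
    (5 * (n : ℝ) + 3) * hDiff n ≤ (n + 3) * hDiff (n + 1) := by
  induction n with
  | zero =>
    have h0 : hDiff 0 = 1 := by rw [hDiff, hCount_zero, hCount_one]; norm_num
    have h1 : hDiff 1 = 3 := by rw [hDiff, hCount_one, hCount_two]; norm_num
    rw [zero_add, h0, h1]
    norm_num
  | succ n ih =>
    obtain ⟨hpos, hup, hlow⟩ := ih
    have hr := hDiff_rec n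
    have hn : (0 : ℝ) ≤ n := Nat.cast_nonneg n
    have hpos' : 0 < hDiff (n + 1) := by
      by_contra h
      nlinarith [mul_pos (show (0 : ℝ) < 5 * n + 3 by linarith) hpos]
    refine ⟨hpos', ?_, ?_⟩
    · nlinarith
    · push_cast
      have : 5 * ((n : ℝ) + 1) * hDiff n ≤ (n + 7) * hDiff (n + 1) := by
        have h3 : (0 : ℝ) < n + 3 := by linarith
        refine le_of_mul_le_mul_left ?_ h3
        nlinarith [mul_le_mul_of_nonneg_left hlow (show (0 : ℝ) ≤ n + 7 by linarith),
          mul_nonneg hn hpos.le]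
      linarith

theorem tendsto_hDiff_ratio : Tendsto (fun n => hDiff (n + 1) / hDiff n) atTop (𝓝 5) := by
  have hlim : Tendsto (fun n : ℕ => (5 : ℝ) - 12 / ((n : ℝ) + 3)) atTop (𝓝 5) := by
    have : Tendsto (fun n : ℕ => (12 : ℝ) / ((n : ℝ) + 3)) atTop (𝓝 0) :=
      Tendsto.div_atTop tendsto_const_nhds
        (tendsto_natCast_atTop_atTop.atTop_add tendsto_const_nhds)
    simpa using this.const_sub 5
  refine tendsto_of_tendsto_of_tendsto_of_le_of_le hlim tendsto_const_nhds (fun n => ?_)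
    fun n => ?_
  · obtain ⟨hpos, -, hlow⟩ := hDiff_bounds n
    have h3 : (0 : ℝ) < n + 3 := by positivity
    rw [le_div_iff₀ hpos, ← mul_le_mul_iff_right₀ h3]
    calc _ = (5 * (n : ℝ) + 3) * hDiff n := by field_simp; ring
      _ ≤ _ := hlow
  · obtain ⟨hpos, hup, -⟩ := hDiff_bounds n
    rwa [div_le_iff₀ hpos]

/-- A sequence satisfying an asymptotically contracting affine recurrence converges. -/
theorem tendsto_of_affine_recurrence {y a b : ℕ → ℝ} {α β : ℝ}
    (hy : ∀ n, y (n + 1) = a n * y n + b n) (ha : Tendsto a atTop (𝓝 α)) (hα : |α| < 1)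
    (hb : Tendsto b atTop (𝓝 β)) : Tendsto y atTop (𝓝 (β / (1 - α))) := by
  obtain ⟨ρ, hαρ, hρ⟩ := exists_between hα
  have hρ0 : 0 ≤ ρ := (abs_nonneg α).trans hαρ.le
  have hα1 : 1 - α ≠ 0 := by linarith [le_abs_self α]
  set L := β / (1 - α) with hL
  have hLeq : α * L + β - L = 0 := by rw [hL]; field_simp; ring
  have hg : Tendsto (fun n => a n * L + b n - L) atTop (𝓝 0) := by
    rw [← hLeq]
    exact ((ha.mul_const L).add hb).sub_const L
  rw [Metric.tendsto_atTop]
  intro ε hε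
  have hδ : 0 < (1 - ρ) * (ε / 2) := mul_pos (by linarith) (by linarith)
  obtain ⟨N, hN⟩ := eventually_atTop.1
    ((ha.abs.eventually_le_const hαρ).and (hg.abs.eventually_le_const (by simpa using hδ)))
  have hbound : ∀ k, |y (N + k) - L| ≤ ρ ^ k * |y N - L| + ε / 2 := by
    intro k
    induction k with
    | zero => simp; linarith
    | succ k ih =>
      obtain ⟨h1, h2⟩ := hN (N + k) (by omega)
      calc |y (N + (k + 1)) - L|
          = |a (N + k) * (y (N + k) - L) + (a (N + k) * L + b (N + k) - L)| := by
            rw [← add_assoc, hy]; ring_nf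
        _ ≤ |a (N + k)| * |y (N + k) - L| + |a (N + k) * L + b (N + k) - L| := by
            rw [← abs_mul]; exact abs_add_le _ _
        _ ≤ ρ * (ρ ^ k * |y N - L| + ε / 2) + (1 - ρ) * (ε / 2) := by gcongr
        _ = ρ ^ (k + 1) * |y N - L| + ε / 2 := by ring
  have hpow : Tendsto (fun k => ρ ^ k * |y N - L|) atTop (𝓝 0) := by
    simpa using (tendsto_pow_atTop_nhds_zero_of_lt_one hρ0 hρ).mul_const |y N - L|
  obtain ⟨K, hK⟩ := eventually_atTop.1 (hpow.eventually_lt_const (half_pos hε))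
  refine ⟨N + K, fun n hn => ?_⟩
  obtain ⟨k, rfl⟩ := Nat.exists_eq_add_of_le (show N ≤ n by omega)
  rw [Real.dist_eq]
  linarith [hbound k, hK k (by omega)]

theorem hCount_pos (n : ℕ) : (0 : ℝ) < hCount n := by
  induction n with
  | zero => rw [hCount_zero]; exact one_pos
  | succ n ih =>
    have := (hDiff_bounds n).1
    rw [hDiff] at this
    linarith

theorem tendsto_hCount_ratio :
    Tendsto (fun n => (hCount n : ℝ) / hCount (n + 1)) atTop (𝓝 (1 / 5)) := by
  have hinv : Tendsto (fun n => hDiff n / hDiff (n + 1)) atTop (𝓝 (5⁻¹)) := by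
    simpa using tendsto_hDiff_ratio.inv₀ (by norm_num)
  have hy : Tendsto (fun n => (hCount (n + 1) : ℝ) / hDiff n) atTop
      (𝓝 ((1 / 2) / (1 - 1 / 2 * 5⁻¹))) := by
    refine tendsto_of_affine_recurrence (a := fun n => 1 / 2 * (hDiff n / hDiff (n + 1)))
      (b := fun _ => 1 / 2) (fun n => ?_) (hinv.const_mul _) (by norm_num [abs_lt])
      tendsto_const_nhds
    have h0 := (hDiff_bounds n).1.ne'
    have h1 := (hDiff_bounds (n + 1)).1.ne'
    have : hDiff (n + 1) = 2 * hCount (n + 2) - hCount (n + 1) := rfl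
    field_simp
    linarith
  have hy1 := (tendsto_add_atTop_iff_nat 1).2 hy
  have := (hy.div hy1 (by norm_num)).mul hinv
  rw [← tendsto_add_atTop_iff_nat 1]
  refine (this.congr fun n => ?_).trans (le_of_eq (by norm_num))
  have h0 := (hDiff_bounds n).1.ne'
  have h1 := (hDiff_bounds (n + 1)).1.ne'
  have h2 := (hCount_pos (n + 1 + 1)).ne'
  simp only [Pi.div_apply]
  field_simp

theorem tendsto_coeff_hSeries_sq_ratio : ∃ l, Tendsto
    (fun n => coeff n (hSeries ^ 2) / (hCount (n + 1) : ℝ)) atTop (𝓝 l) := by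
  have hq := (tendsto_add_atTop_iff_nat 1).2 tendsto_hCount_ratio
  refine ⟨_, tendsto_of_affine_recurrence
    (a := fun n => 1 / 2 * ((hCount (n + 1) : ℝ) / hCount (n + 1 + 1)))
    (b := fun n => 1 / 2 * (1 + (hCount (n + 1) : ℝ) / hCount (n + 1 + 1))) (fun n => ?_)
    (hq.const_mul _) (by norm_num [abs_lt]) ((hq.const_add 1).const_mul _)⟩
  have h := hCount_add_hCount n
  have h1 := (hCount_pos (n + 1)).ne'
  have h2 := (hCount_pos (n + 1 + 1)).ne'
  field_simp
  linarith

open scoped Classical in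
theorem topPts_mean :
    Tendsto (fun n : ℕ =>
        (∑ σ : Equiv.Perm (Fin n), if AvoidsH σ then (topPts σ : ℝ) else 0)
          / ((n : ℝ) * (hCount n : ℝ)))
      atTop (nhds (1 / 5)) := by
  obtain ⟨l, hl⟩ := tendsto_coeff_hSeries_sq_ratio
  have hn : Tendsto (fun n : ℕ => (n : ℝ) + 1) atTop atTop :=
    tendsto_natCast_atTop_atTop.atTop_add tendsto_const_nhds
  have h := tendsto_hCount_ratio.sub (hl.div_atTop hn)
  rw [sub_zero] at h
  rw [← tendsto_add_atTop_iff_nat 1]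
  refine h.congr fun n => ?_
  have h1 := (hCount_pos (n + 1)).ne'
  have h2 : (n : ℝ) + 1 ≠ 0 := by positivity
  rw [sum_topPts_succ]
  push_cast
  field_simp
end
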